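/- Let p be an odd prime and let R be a left nearring with identity element a whose additive group contains elements b, c such that p²•a = 0, p•a ≠ 0, p•b = 0, p•c = 0, −b + a + b = (1 − p)•a, a + c = c + a and b + c = c + b. Let x ∈ R and suppose x·b = α•a + β•b + γ•c and x·c = ν•a + μ•b + φ•c for integers α, β, γ, ν, μ, φ. Then p divides α and p divides ν. -/

import Mathlib

/-- A left nearring with identity: `(R,+)` is a (not necessarily abelian) group,
`(R,·)` is a monoid, and the left distributive law holds. -/
class NearringWithOne (R : Type*) extends AddGroup R, Monoid R where
  left_distrib : ∀ x y z : R, x * (y + z) = x * y + x * z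

theorem aux_nsmul_add {G : Type*} [AddGroup G] (u v w : G) (h : v + u = u + v + w)
    (hu : AddCommute w u) (hv : AddCommute w v) (n : ℕ) :
    n • (u + v) = n • u + n • v + (n.choose 2) • w := by
  have hn : ∀ n : ℕ, n • v + u = u + n • v + n • w := by
    intro n
    have h1 : AddSemiconjBy u (v + w) v := by
      show u + (v + w) = v + u
      rw [h, add_assoc]
    have h2 : u + n • (v + w) = n • v + u := AddSemiconjBy.nsmul_right h1 n
    rw [← h2, hv.symm.add_nsmul, add_assoc]
  induction n with
  | zero => simp
  | succ n ih =>
    have e1 : (n.choose 2) • w + (u + v) = (u + v) + (n.choose 2) • w :=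
      (hu.add_right hv).nsmul_left _
    have e2 : n • w + v = v + n • w := hv.nsmul_left n
    rw [succ_nsmul, ih, add_assoc, e1]
    have hc : (n + 1).choose 2 = n + n.choose 2 := by
      rw [Nat.choose_succ_succ' n 1, Nat.choose_one_right]
    rw [hc, add_nsmul w n, succ_nsmul u, succ_nsmul v]
    calc n • u + n • v + (u + v + n.choose 2 • w)
        = n • u + (n • v + u) + v + n.choose 2 • w := by simp only [add_assoc]
      _ = n • u + (u + n • v) + (n • w + v) + n.choose 2 • w := by
          rw [hn]; simp only [add_assoc]
      _ = _ := by rw [e2]; simp only [add_assoc]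

theorem aux_main (p : ℕ) (hp : p.Prime) (hodd : Odd p)
    {G : Type*} [AddGroup G] (a b c : G)
    (hpa : (p ^ 2) • a = 0) (hpa' : p • a ≠ 0) (hpb : p • b = 0) (hpc : p • c = 0)
    (hab : -b + a + b = ((1 : ℤ) - p) • a)
    (hac : a + c = c + a) (hbc : b + c = c + b) (α β γ : ℤ)
    (h : p • (α • a + β • b + γ • c) = 0) : (p : ℤ) ∣ α := by
  obtain ⟨z, hz⟩ : ∃ z, z = p • a := ⟨_, rfl⟩
  have hpz : p • z = 0 := by rw [hz, ← mul_nsmul, ← sq, hpa]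
  have hza : AddCommute z a := by rw [hz]; exact (AddCommute.refl a).nsmul_left p
  have h0 : AddSemiconjBy b (((1 : ℤ) - p) • a) a := by
    show b + _ = a + b
    rw [← hab]; simp [add_assoc]
  have hkey : ((1 : ℤ) - p) • a = a + -z := by
    rw [sub_zsmul, one_zsmul, natCast_zsmul, hz]
  have hzb : AddCommute z b := by
    have h1 : b + p • (((1 : ℤ) - p) • a) = p • a + b := AddSemiconjBy.nsmul_right h0 p
    rw [hkey, hza.symm.neg_right.add_nsmul, neg_nsmul, hpz, ← hz] at h1
    show z + b = b + z
    rw [← h1]; simp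
  have hba : AddSemiconjBy b a (a + z) := by
    have h1 : b + (a + -z) = a + b := by rw [← hkey]; exact h0
    have h2 : b + a = a + b + z := by rw [← h1]; simp [add_assoc]
    show b + a = a + z + b
    rw [h2, add_assoc, add_assoc, hzb.eq]
  have h2 : AddSemiconjBy (α • a) (b + α • z) b := by
    have h1 : b + α • a = α • (a + z) + b := AddSemiconjBy.zsmul_right hba α
    rw [hza.symm.zsmul_add] at h1
    show α • a + (b + α • z) = b + α • a
    have e : α • z + b = b + α • z := hzb.zsmul_left α
    rw [h1, add_assoc, e]
  have h3 : β • b + α • a = α • a + β • b + β • α • z := by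
    have h1 : α • a + β • (b + α • z) = β • b + α • a := AddSemiconjBy.zsmul_right h2 β
    rw [← h1, (hzb.zsmul_left α).symm.zsmul_add, add_assoc]
  have hca : AddCommute a c := hac
  have hcb : AddCommute b c := hbc
  have hcc : AddCommute (α • a + β • b) (γ • c) :=
    ((hca.zsmul_left α).add_left (hcb.zsmul_left β)).zsmul_right γ
  have swap : ∀ (k : ℤ) (y : G), p • (k • y) = k • (p • y) := fun k y => by
    rw [← natCast_zsmul, ← natCast_zsmul, ← mul_zsmul', ← mul_zsmul]
  have hch : p.choose 2 • (β • α • z) = 0 := by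
    obtain ⟨k, hk⟩ : p ∣ p.choose 2 := by
      refine hp.dvd_choose_self (by norm_num) ?_
      have := hp.two_le
      rcases hodd with ⟨m, hm⟩
      omega
    rw [hk, mul_nsmul, swap, swap, hpz]; simp
  rw [hcc.add_nsmul, swap γ, hpc, zsmul_zero, add_zero,
    aux_nsmul_add _ _ _ h3 ((hza.zsmul_left α).zsmul_left β |>.zsmul_right α)
      ((hzb.zsmul_left α).zsmul_left β |>.zsmul_right β), hch, add_zero, swap β, hpb,
    zsmul_zero, add_zero, swap α, ← hz] at h
  have ho : addOrderOf z = p := by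
    have := Fact.mk hp
    exact addOrderOf_eq_prime hpz (by rw [hz]; exact hpa')
  rw [← ho]
  exact addOrderOf_dvd_iff_zsmul_eq_zero.mpr h

theorem aux_mul_nsmul {R : Type*} [NearringWithOne R] (x y : R) (n : ℕ) :
    x * (n • y) = n • (x * y) := by
  have h0 : x * (0 : R) = 0 := by
    have := NearringWithOne.left_distrib x 0 0
    rw [add_zero] at this
    exact left_eq_add.mp this
  induction n with
  | zero => simp [h0]
  | succ n ih => rw [succ_nsmul, succ_nsmul, NearringWithOne.left_distrib, ih]

/-- In a left nearring with identity `a` whose additive group contains elements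
`b, c` satisfying the `G₅` relations (with `p` an odd prime), if
`x·b = α•a + β•b + γ•c` and `x·c = ν•a + μ•b + φ•c`, then `p ∣ α` and `p ∣ ν`. -/
theorem coeff_alpha_nu_div_p_G5 (p : ℕ) (hp : p.Prime) (hodd : Odd p)
    (R : Type*) [NearringWithOne R] (a b c : R) (ha : a = 1)
    (hpa : (p ^ 2) • a = 0) (hpa' : p • a ≠ 0) (hpb : p • b = 0) (hpc : p • c = 0)
    (hab : -b + a + b = ((1 : ℤ) - p) • a)
    (hac : a + c = c + a) (hbc : b + c = c + b)
    (x : R) (α β γ ν μ φ : ℤ)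
    (hxb : x * b = α • a + β • b + γ • c)
    (hxc : x * c = ν • a + μ • b + φ • c) :
    (p : ℤ) ∣ α ∧ (p : ℤ) ∣ ν := by
  have h0 : x * (0 : R) = 0 := by
    have := aux_mul_nsmul x 0 0
    simpa using this
  refine ⟨aux_main p hp hodd a b c hpa hpa' hpb hpc hab hac hbc α β γ ?_,
    aux_main p hp hodd a b c hpa hpa' hpb hpc hab hac hbc ν μ φ ?_⟩
  · rw [← hxb, ← aux_mul_nsmul, hpb, h0]
  · rw [← hxc, ← aux_mul_nsmul, hpc, h0]
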